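/- arXiv:2407.02610 — 3 statements merged into one kernel-verified Lean document; each statement's English description precedes it below -/
import Mathlib

section
/- Let g : ℕ → ℝ be a quantization grid on the nonnegative reals satisfying: g(0) = 0; g is strictly increasing; for every j the grid point g(j) is an integer multiple of the bin width g(j+1) - g(j); the bin widths are nondecreasing, i.e. g(j+1) - g(j) ≥ g(j) - g(j-1) for j ≥ 1; and every bin width is at most S. Let i ≥ 0 and y ∈ ℝ be such that z = g(i) + y ≥ 0, and let j be the index with g(j) ≤ z < g(j+1). Set s = g(j+1) - g(j) and q = (z - g(j))/s. Then the expected squared error of stochastically rounding z on the grid satisfies s²·q·(1 - q) ≤ S·|y|. -/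
/-!
The expected squared error of stochastic rounding equals `(z - g j) * (g (j + 1) - z)`, the product
of the distances from `z` to the two ends of its bin. Since the grid point `g i` is not interior to
the bin, one of these distances is at most `|z - g i| = |y|`, and the other is at most the bin
width, hence at most `S`.
-/

/-- Quantization error decomposition for a non-uniform grid `g : ℕ → ℝ` on the nonnegative
reals (with `g 0 = 0`, strictly increasing, each grid point an integer multiple of its bin
width, nondecreasing bin widths, and bin widths at most `S`): if a grid point `g i` is
perturbed by `y` so that `z = g i + y ≥ 0` lies in the bin `[g j, g (j+1))`, then the
expected squared stochastic rounding error `s²·q·(1-q)` of `z` is at most `S·|y|`. -/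
theorem grid_quantization_error_decomposition (g : ℕ → ℝ) (S : ℝ)
    (hg0 : g 0 = 0) (hmono : StrictMono g)
    (hmult : ∀ j : ℕ, ∃ k : ℤ, g j = k * (g (j + 1) - g j))
    (hinc : ∀ j : ℕ, g (j + 1) - g j ≤ g (j + 2) - g (j + 1))
    (hwidth : ∀ j : ℕ, g (j + 1) - g j ≤ S)
    (i : ℕ) (y z : ℝ) (hz : z = g i + y) (hz0 : 0 ≤ z)
    (j : ℕ) (hjl : g j ≤ z) (hju : z < g (j + 1))
    (s q : ℝ) (hsdef : s = g (j + 1) - g j) (hqdef : q = (z - g j) / s) :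
    s ^ 2 * q * (1 - q) ≤ S * |y| := by
  have hs : 0 < s := by
    rw [hsdef]
    exact sub_pos.mpr (hmono (Nat.lt_succ_self j))
  have hsS : s ≤ S := hsdef ▸ hwidth j
  have herr : s ^ 2 * q * (1 - q) = (z - g j) * (g (j + 1) - z) := by
    have hsq : s * q = z - g j := by
      rw [hqdef]
      field_simp
    have hsq_compl : s * (1 - q) = g (j + 1) - z := by linarith
    rw [← hsq, ← hsq_compl]
    ring
  rw [herr]
  -- The end of the bin that lies between `z` and `g i` is the right one iff `j < i`.
  rcases Nat.lt_or_ge j i with hij | hij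
  · have hgi : g (j + 1) ≤ g i := hmono.monotone hij
    have hy : g (j + 1) - z ≤ |y| := by linarith [neg_le_abs y]
    exact mul_le_mul (by linarith) hy (by linarith) (by linarith)
  · have hgi : g i ≤ g j := hmono.monotone hij
    have hy : z - g j ≤ |y| := by linarith [le_abs_self y]
    rw [mul_comm]
    exact mul_le_mul (by linarith) hy (by linarith) (by linarith)
end

section
/- Let F : ℝ^d → ℝ be differentiable and convex, let w, w_*, v ∈ ℝ^d with ‖v - w‖₂ ≤ √d·S (v plays the role of the quantized model Q(w)), and let (Ω, μ) be a probability space with a measurable stochastic gradient estimator G_est : Ω → ℝ^d satisfying ∫ G_est dμ = ∇F(v) and ∫ ‖G_est‖₂² dμ ≤ G². Then for any step size η > 0, the updated iterate w' (ω) = w - η·G_est(ω) satisfies ∫ ‖w'(ω) - w_*‖₂² dμ(ω) ≤ ‖w - w_*‖₂² - 2η·(F(v) - F(w_*)) + 2η·G·√d·S + η²·G². -/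
/-!
Expanding the square and integrating gives
`E‖w' - w_*‖² = ‖w - w_*‖² - 2η⟪w - w_*, ∇F(v)⟫ + η² E‖G_est‖²` (`integral_norm_sub_smul_sq`).
Split `w - w_* = (v - w_*) - (v - w)`. The first part is handled by the first-order convexity
inequality at `v` (`sub_le_inner_gradient`), the second by Cauchy–Schwarz together with
`‖∇F(v)‖ ≤ G`. The latter bound is the nonnegativity of the variance of `G_est`, that is, the same
expansion applied to `E‖∇F(v) - G_est‖²`.
-/

open MeasureTheory

theorem integral_norm_sub_smul_sq {E Ω : Type*} [NormedAddCommGroup E] [InnerProductSpace ℝ E]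
    [CompleteSpace E] [MeasurableSpace Ω] (μ : Measure Ω) [IsProbabilityMeasure μ] (g : Ω → E)
    (hg : Integrable g μ) (hg2 : Integrable (fun ω => ‖g ω‖ ^ 2) μ) (a : E) (η : ℝ) :
    ∫ ω, ‖a - η • g ω‖ ^ 2 ∂μ
      = ‖a‖ ^ 2 - 2 * η * inner ℝ a (∫ ω, g ω ∂μ) + η ^ 2 * ∫ ω, ‖g ω‖ ^ 2 ∂μ := by
  have hexp : ∀ ω, ‖a - η • g ω‖ ^ 2
      = ‖a‖ ^ 2 - 2 * η * inner ℝ a (g ω) + η ^ 2 * ‖g ω‖ ^ 2 := fun ω => by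
    rw [norm_sub_sq_real, inner_smul_right, norm_smul, mul_pow, Real.norm_eq_abs, sq_abs]
    ring
  have hi : Integrable (fun ω => 2 * η * inner ℝ a (g ω)) μ := (hg.const_inner a).const_mul _
  have hsub : Integrable (fun ω => ‖a‖ ^ 2 - 2 * η * inner ℝ a (g ω)) μ :=
    (integrable_const _).sub hi
  simp_rw [hexp]
  rw [integral_add hsub (hg2.const_mul _),
    integral_sub (integrable_const _) hi, integral_const_mul, integral_const_mul,
    integral_inner hg]
  simp

/-- First-order convexity inequality `F y ≥ F x + ⟪∇F x, y - x⟫`, obtained by restricting `F` to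
the segment from `x` to `y` and comparing the derivative at `0` with the slope over `[0, 1]`. -/
theorem sub_le_inner_gradient {E : Type*} [NormedAddCommGroup E] [InnerProductSpace ℝ E]
    [CompleteSpace E] {F : E → ℝ} (hconv : ConvexOn ℝ Set.univ F) {x : E}
    (hdiff : DifferentiableAt ℝ F x) (y : E) :
    F x - F y ≤ inner ℝ (x - y) (gradient F x) := by
  have hc : ConvexOn ℝ Set.univ (F ∘ AffineMap.lineMap (k := ℝ) x y) := by
    simpa using hconv.comp_affineMap (AffineMap.lineMap (k := ℝ) x y)
  have hF : HasFDerivAt F (fderiv ℝ F x) (AffineMap.lineMap (k := ℝ) x y (0 : ℝ)) := by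
    simpa using hdiff.hasFDerivAt
  have hd := hF.comp_hasDerivAt (0 : ℝ) AffineMap.hasDerivAt_lineMap
  have h := hc.le_slope_of_hasDerivAt (Set.mem_univ 0) (Set.mem_univ 1) zero_lt_one hd
  have hgrad : inner ℝ (gradient F x) (y - x) = fderiv ℝ F x (y - x) := by
    simp [gradient]
  simp only [slope_def_field, Function.comp_apply, AffineMap.lineMap_apply_one,
    AffineMap.lineMap_apply_zero, sub_zero, div_one] at h
  rw [real_inner_comm, ← neg_sub y x, inner_neg_right, hgrad]
  linarith

/-- One-step descent inequality for quantization-aware SGD: with the stochastic gradient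
evaluated at the quantized model `v` (satisfying `‖v - w‖ ≤ √d·S`), unbiased with second
moment at most `G²`, the update `w' = w - η·G_est` satisfies
`E‖w' - w_*‖² ≤ ‖w - w_*‖² - 2η(F(v) - F(w_*)) + 2ηG√dS + η²G²`. -/
theorem qat_sgd_one_step (d : ℕ) (F : EuclideanSpace ℝ (Fin d) → ℝ)
    (hdiff : Differentiable ℝ F) (hconv : ConvexOn ℝ Set.univ F)
    (S G η : ℝ) (hG : 0 ≤ G) (hη : 0 < η)
    (w wstar v : EuclideanSpace ℝ (Fin d)) (hv : ‖v - w‖ ≤ Real.sqrt d * S)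
    {Ω : Type*} [MeasurableSpace Ω] (μ : Measure Ω) [IsProbabilityMeasure μ]
    (Gest : Ω → EuclideanSpace ℝ (Fin d)) (hmeas : Measurable Gest)
    (hint : Integrable Gest μ) (hint2 : Integrable (fun ω => ‖Gest ω‖ ^ 2) μ)
    (hmean : ∫ ω, Gest ω ∂μ = gradient F v)
    (hsec : ∫ ω, ‖Gest ω‖ ^ 2 ∂μ ≤ G ^ 2) :
    ∫ ω, ‖(w - η • Gest ω) - wstar‖ ^ 2 ∂μ
      ≤ ‖w - wstar‖ ^ 2 - 2 * η * (F v - F wstar)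
        + 2 * η * G * (Real.sqrt d * S) + η ^ 2 * G ^ 2 := by
  have hgradG : ‖gradient F v‖ ≤ G := by
    have hvar := integral_norm_sub_smul_sq μ Gest hint hint2 (gradient F v) 1
    have hnonneg : 0 ≤ ∫ ω, ‖gradient F v - (1 : ℝ) • Gest ω‖ ^ 2 ∂μ :=
      integral_nonneg fun ω => sq_nonneg _
    rw [hvar, hmean, real_inner_self_eq_norm_sq] at hnonneg
    exact le_of_sq_le_sq (by linarith) hG
  have hfirst := sub_le_inner_gradient hconv (hdiff v) wstar
  have hcs : inner ℝ (v - w) (gradient F v) ≤ G * (Real.sqrt d * S) :=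
    calc inner ℝ (v - w) (gradient F v) ≤ ‖v - w‖ * ‖gradient F v‖ := real_inner_le_norm _ _
      _ ≤ ‖v - w‖ * G := by gcongr
      _ ≤ (Real.sqrt d * S) * G := by gcongr
      _ = G * (Real.sqrt d * S) := mul_comm _ _
  have hsplit : inner ℝ (w - wstar) (gradient F v)
      = inner ℝ (v - wstar) (gradient F v) - inner ℝ (v - w) (gradient F v) := by
    rw [← inner_sub_left]
    congr 1
    abel
  have hinner : F v - F wstar - G * (Real.sqrt d * S) ≤ inner ℝ (w - wstar) (gradient F v) := by
    linarith
  simp_rw [sub_right_comm w _ wstar]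
  rw [integral_norm_sub_smul_sq μ Gest hint hint2, hmean]
  have h1 := mul_le_mul_of_nonneg_left hinner (by positivity : 0 ≤ 2 * η)
  have h2 := mul_le_mul_of_nonneg_left hsec (sq_nonneg η)
  linarith
end

section
/- Let s > 0, let x ∈ ℝ lie on the quantization grid s·ℤ (i.e., x = s·k for some integer k), and let y ∈ ℝ. Set q = (x + y)/s - ⌊(x + y)/s⌋. Then the expected squared error of stochastically quantizing x + y with scale s satisfies s²·q·(1 - q) ≤ s·|y|. -/
/-!
Adding a grid point does not change the fractional part, so with `t = y / s` the claim is
`q * (1 - q) ≤ |t|` for `q = Int.fract t`, multiplied by `s ^ 2`. Both factors lie in `[0, 1]`, and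
one of them is at most `|t|`: the factor `q` (distance down to `⌊t⌋ ≥ 0`) when `t ≥ 0`, the
factor `1 - q` (distance up to `⌊t⌋ + 1 ≤ 0`) when `t < 0`.
-/

/-- Uniform-grid quantization error decomposition: if `x` lies on the grid `s·ℤ` and is
perturbed by `y`, then the expected squared error of stochastically quantizing `x + y` with
scale `s` is at most `s·|y|`. -/
theorem stochastic_requantization_error_bound (s : ℝ) (hs : 0 < s) (x : ℝ) (k : ℤ)
    (hx : x = s * k) (y : ℝ) (q : ℝ) (hq : q = (x + y) / s - ⌊(x + y) / s⌋) :
    s ^ 2 * q * (1 - q) ≤ s * |y| := by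
  -- The grid point `x` shifts the argument of the floor by the integer `k`, so `q = fract (y / s)`.
  have hdiv : (x + y) / s = k + y / s := by rw [hx]; field_simp
  have hq' : q = y / s - ⌊y / s⌋ := by
    rw [hq, hdiv, Int.floor_intCast_add]; push_cast; ring
  obtain ⟨t, ht⟩ : ∃ t, t = y / s := ⟨_, rfl⟩
  have hy : y = s * t := by rw [ht]; field_simp
  rw [← ht] at hq'
  have h0 : 0 ≤ q := by linarith [Int.floor_le t]
  have h1 : q ≤ 1 := by linarith [Int.lt_floor_add_one t]
  have key : q * (1 - q) ≤ |t| := by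
    rcases le_or_gt 0 t with h | h
    · -- Here `⌊t⌋ ≥ 0`, so `q ≤ t`.
      have hf : (0 : ℝ) ≤ ⌊t⌋ := by exact_mod_cast Int.floor_nonneg.2 h
      rw [abs_of_nonneg h]
      nlinarith
    · -- Here `⌊t⌋ ≤ -1`, so `1 - q ≤ -t`.
      have hf : (⌊t⌋ : ℝ) ≤ -1 := by
        have : ⌊t⌋ < 0 := Int.floor_lt.2 (by simpa using h)
        exact_mod_cast (by omega : ⌊t⌋ ≤ -1)
      rw [abs_of_neg h]
      nlinarith
  calc s ^ 2 * q * (1 - q) = s ^ 2 * (q * (1 - q)) := by ring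
    _ ≤ s ^ 2 * |t| := by gcongr
    _ = s * |y| := by rw [hy, abs_mul, abs_of_pos hs]; ring
end
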